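/- (Redundancy of all other Fourier–Motzkin combinations.) Let J⁺_1, …, J⁺_{n⁺} and J⁻_1, …, J⁻_{n⁻} be two lists of nonempty subsets of 𝒦 having the same presence vector, and let J⊕_1, …, J⊕_{c_max} be their common compact form of the element rearrangement without empty sets, where c_max is the largest entry of the common presence vector. Then, with b⁺(T) = I(V_T; Y | V_{T^c}, Q) and b⁻(T) = I(V_T; Z | Q), one has ∑_{i=1}^{n⁺} b⁺(J⁺_i) − ∑_{i=1}^{n⁻} b⁻(J⁻_i) ≥ ∑_{i=1}^{c_max} [ b⁺(J⊕_i) − b⁻(J⊕_i) ]. -/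

import Mathlib

open scoped Classical

/-- Probability that the random variable `X` (on the finite sample space `Ω` with
probability mass function `p`) takes the value `a`. -/
noncomputable def prob {Ω : Type} [Fintype Ω] (p : Ω → ℝ) {α : Type} (X : Ω → α)
    (a : α) : ℝ :=
  ∑ ω : Ω, if X ω = a then p ω else 0

/-- Shannon entropy (base 2) of the random variable `X`, with the convention
`0 · log 0 = 0`. -/
noncomputable def ent {Ω : Type} [Fintype Ω] (p : Ω → ℝ) {α : Type} [Fintype α]
    (X : Ω → α) : ℝ :=
  -∑ a : α, prob p X a * Real.logb 2 (prob p X a)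

/-- Conditional mutual information `I(X; Y | Z) = H(X,Z) + H(Y,Z) - H(X,Y,Z) - H(Z)`. -/
noncomputable def condMI {Ω : Type} [Fintype Ω] (p : Ω → ℝ) {α β γ : Type}
    [Fintype α] [Fintype β] [Fintype γ] (X : Ω → α) (Y : Ω → β) (Z : Ω → γ) : ℝ :=
  ent p (fun ω => (X ω, Z ω)) + ent p (fun ω => (Y ω, Z ω))
    - ent p (fun ω => (X ω, Y ω, Z ω)) - ent p Z

/-- The tuple-valued random variable `V_J = (V_j)_{j ∈ J}`. -/
def VJ {Ω : Type} {K : ℕ} {α : Fin K → Type} (V : (i : Fin K) → Ω → α i)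
    (J : Finset (Fin K)) : Ω → ((j : J) → α j) :=
  fun ω j => V j ω

/-- `V_1, …, V_K` are mutually conditionally independent given `Q`:
`P(V_1 = v_1, …, V_K = v_K, Q = q) · P(Q = q)^(K-1) = ∏ i, P(V_i = v_i, Q = q)`. -/
def CondIndep {Ω : Type} [Fintype Ω] {𝒬 : Type} {K : ℕ} {α : Fin K → Type}
    (p : Ω → ℝ) (Q : Ω → 𝒬) (V : (i : Fin K) → Ω → α i) : Prop :=
  ∀ (q : 𝒬) (v : (i : Fin K) → α i),
    prob p (fun ω => ((fun i => V i ω : (i : Fin K) → α i), Q ω)) (v, q)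
        * (prob p Q q) ^ (K - 1)
      = ∏ i : Fin K, prob p (fun ω => (V i ω, Q ω)) (v i, q)

/-- The `i`-th set of the compact form of the element rearrangement of the list
`T 0, …, T (t-1)` of subsets of `Fin K`. -/
def compactForm {K t : ℕ} (T : Fin t → Finset (Fin K)) (i : ℕ) : Finset (Fin K) :=
  (Finset.powersetCard i (Finset.univ : Finset (Fin t))).sup fun S => S.inf T

/-- The largest entry of the presence vector of the list `T`. -/
def tMax {K t : ℕ} (T : Fin t → Finset (Fin K)) : ℕ :=
  Finset.univ.sup fun k : Fin K => (Finset.univ.filter fun j : Fin t => k ∈ T j).card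

/-!
For a submodular function `g` on a distributive lattice with `g ⊥ = 0`, element rearrangement does
not increase `∑ g (T j)`. Indeed, when a member `a` is added to a family with rearranged terms
`R₀ ≥ R₁ ≥ ⋯`, the new `(i + 1)`-st term is the join of `R_{i + 1}` and `a ⊓ R_i`, and the meet of
these two is `a ⊓ R_{i + 1}`. So submodularity bounds the change of the `(i + 1)`-st value of `g` by
`g (a ⊓ R_i) - g (a ⊓ R_{i + 1})`, and these differences telescope to `g a`.

It remains to see that `b⁺` and `-b⁻` are submodular. Since the `V_k` are conditionally independent,
`S ↦ H(V_S, Q)` is modular, whereas `S ↦ H(V_S, W, Q)` is submodular for every `W`; hence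
`S ↦ -I(V_S; W | Q)` is submodular. With `W = Z` this is `-b⁻`. With `W = Y` the chain rule gives
`b⁺(T) = I(V_𝒦; Y | Q) - I(V_{Tᶜ}; Y | Q)`, which is submodular because complementation swaps
joins and meets.
-/

/-- The `i`-th term of the element rearrangement of the family `T j`, `j ∈ s`: the join of all the
meets of `i` members. It is stated in a lattice, where it satisfies the Pascal-type recursion
`elementRearrangement_insert_succ`; `compactForm` is the case of finite sets. -/
def elementRearrangement {ι L : Type*} [Lattice L] [BoundedOrder L] (T : ι → L) (s : Finset ι)
    (i : ℕ) : L :=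
  (s.powersetCard i).sup fun S => S.inf T

/-- Submodularity of a function on a lattice, with values in any ordered type with an addition. -/
def IsSubmodular {L M : Type*} [Lattice L] [Add M] [LE M] (g : L → M) : Prop :=
  ∀ a b, g (a ⊔ b) + g (a ⊓ b) ≤ g a + g b

section Rearrangement

variable {ι L : Type*}

lemma elementRearrangement_zero [Lattice L] [BoundedOrder L] (T : ι → L) (s : Finset ι) :
    elementRearrangement T s 0 = ⊤ := by
  simp [elementRearrangement]

lemma elementRearrangement_empty_succ [Lattice L] [BoundedOrder L] (T : ι → L) (i : ℕ) :
    elementRearrangement T ∅ (i + 1) = ⊥ := by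
  rw [elementRearrangement, Finset.powersetCard_eq_empty.2 (by simp), Finset.sup_empty]

lemma elementRearrangement_antitone [Lattice L] [BoundedOrder L] (T : ι → L) (s : Finset ι) :
    Antitone (elementRearrangement T s) := by
  refine fun m n hmn => Finset.sup_le fun S hS => ?_
  obtain ⟨hSs, rfl⟩ := Finset.mem_powersetCard.1 hS
  obtain ⟨R, hRS, rfl⟩ := Finset.exists_subset_card_eq hmn
  exact (Finset.inf_mono hRS).trans
    (Finset.le_sup (f := fun S => S.inf T) (Finset.mem_powersetCard.2 ⟨hRS.trans hSs, rfl⟩))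

lemma elementRearrangement_insert_succ [DistribLattice L] [BoundedOrder L] [DecidableEq ι]
    (T : ι → L) {a : ι} {s : Finset ι} (ha : a ∉ s) (i : ℕ) :
    elementRearrangement T (insert a s) (i + 1)
      = elementRearrangement T s (i + 1) ⊔ T a ⊓ elementRearrangement T s i := by
  simp only [elementRearrangement, Finset.powersetCard_succ_insert ha, Finset.sup_union,
    Finset.sup_image, Function.comp_def, Finset.inf_insert, Finset.sup_inf_distrib_left]

lemma IsSubmodular.sum_elementRearrangement_le [DistribLattice L] [BoundedOrder L] {M : Type*}
    [AddCommGroup M] [PartialOrder M] [IsOrderedAddMonoid M] {g : L → M} (hg : IsSubmodular g)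
    (h0 : g ⊥ = 0) (T : ι → L) (s : Finset ι) {N : ℕ} (hN : elementRearrangement T s (N + 1) = ⊥) :
    ∑ i ∈ Finset.range N, g (elementRearrangement T s (i + 1)) ≤ ∑ j ∈ s, g (T j) := by
  induction s using Finset.induction_on with
  | empty => simp [elementRearrangement_empty_succ, h0]
  | insert a s ha ih =>
    have hrec := elementRearrangement_insert_succ T ha
    obtain ⟨hsN, haN⟩ := sup_eq_bot_iff.1 ((hrec N).symm.trans hN)
    let R := elementRearrangement T s
    have hstep : ∀ i, g (elementRearrangement T (insert a s) (i + 1))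
        ≤ (g (T a ⊓ R i) - g (T a ⊓ R (i + 1))) + g (R (i + 1)) := fun i => by
      have hinf : R (i + 1) ⊓ (T a ⊓ R i) = T a ⊓ R (i + 1) := by
        rw [inf_left_comm, inf_eq_left.2 (elementRearrangement_antitone T s i.le_succ)]
      have hsub := hg (R (i + 1)) (T a ⊓ R i)
      rw [← hrec, hinf, add_comm (g (R _))] at hsub
      rwa [sub_add_eq_add_sub, le_sub_iff_add_le]
    calc ∑ i ∈ Finset.range N, g (elementRearrangement T (insert a s) (i + 1))
        ≤ ∑ i ∈ Finset.range N, ((g (T a ⊓ R i) - g (T a ⊓ R (i + 1))) + g (R (i + 1))) :=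
          Finset.sum_le_sum fun i _ => hstep i
      _ = g (T a) + ∑ i ∈ Finset.range N, g (R (i + 1)) := by
          rw [Finset.sum_add_distrib, Finset.sum_range_sub', haN, h0, sub_zero]
          simp only [R, elementRearrangement_zero, inf_top_eq]
      _ ≤ ∑ j ∈ insert a s, g (T j) := by
          rw [Finset.sum_insert ha]
          gcongr
          exact ih hsN

end Rearrangement

lemma IsSubmodular.comp_compl {L M : Type*} [BooleanAlgebra L] [AddCommMonoid M] [LE M] {g : L → M}
    (hg : IsSubmodular g) : IsSubmodular fun a => g aᶜ := fun a b => by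
  simpa only [compl_sup, compl_inf, add_comm (g (aᶜ ⊓ bᶜ))] using hg aᶜ bᶜ

lemma IsSubmodular.const_add {L M : Type*} [Lattice L] [AddCommMonoid M] [Preorder M]
    [IsOrderedAddMonoid M] {g : L → M} (hg : IsSubmodular g) (c : M) :
    IsSubmodular fun a => c + g a := fun a b => by
  simpa only [add_add_add_comm c] using add_le_add_right (hg a b) (c + c)

section Finset

variable {κ M : Type*} [DecidableEq κ] [AddCommGroup M] [PartialOrder M] [IsOrderedAddMonoid M]
  {g : Finset κ → M}

lemma IsSubmodular.le_add_sum_singleton (hg : IsSubmodular g) (S : Finset κ) :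
    g S ≤ g ∅ + ∑ i ∈ S, (g {i} - g ∅) := by
  induction S using Finset.induction_on with
  | empty => simp
  | insert i S hi ih =>
    have h := hg {i} S
    rw [Finset.sup_eq_union, Finset.inf_eq_inter, Finset.singleton_inter_of_notMem hi,
      ← Finset.insert_eq] at h
    calc g (insert i S) ≤ g {i} + g S - g ∅ := le_sub_iff_add_le.2 h
      _ ≤ g {i} + (g ∅ + ∑ j ∈ S, (g {j} - g ∅)) - g ∅ := by gcongr
      _ = g ∅ + ∑ j ∈ insert i S, (g {j} - g ∅) := by rw [Finset.sum_insert hi]; abel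

lemma IsSubmodular.eq_add_sum_singleton [Fintype κ] (hg : IsSubmodular g)
    (huniv : g Finset.univ = g ∅ + ∑ i, (g {i} - g ∅)) (S : Finset κ) :
    g S = g ∅ + ∑ i ∈ S, (g {i} - g ∅) := by
  -- Both `S` and `Sᶜ` satisfy the upper bound, and `huniv` leaves no slack in their sum.
  refine (hg.le_add_sum_singleton S).antisymm ?_
  refine le_of_add_le_add_right (a := g ∅ + ∑ i ∈ Sᶜ, (g {i} - g ∅)) ?_
  calc (g ∅ + ∑ i ∈ S, (g {i} - g ∅)) + (g ∅ + ∑ i ∈ Sᶜ, (g {i} - g ∅))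
      = g (S ∪ Sᶜ) + g (S ∩ Sᶜ) := by
        rw [Finset.union_compl, Finset.inter_compl, huniv, ← Finset.sum_add_sum_compl S]
        abel
    _ ≤ g S + g Sᶜ := hg S Sᶜ
    _ ≤ g S + (g ∅ + ∑ i ∈ Sᶜ, (g {i} - g ∅)) := by
        gcongr
        exact hg.le_add_sum_singleton Sᶜ

lemma IsSubmodular.union_add_inter_eq [Fintype κ] (hg : IsSubmodular g)
    (huniv : g Finset.univ = g ∅ + ∑ i, (g {i} - g ∅)) (S T : Finset κ) :
    g (S ∪ T) + g (S ∩ T) = g S + g T := by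
  have hsum := hg.eq_add_sum_singleton huniv
  rw [hsum (S ∪ T), hsum (S ∩ T), hsum S, hsum T, add_add_add_comm, Finset.sum_union_inter,
    add_add_add_comm]

end Finset

section Entropy

lemma sum_mul_logb_div_nonpos {ι : Type*} [Fintype ι] {b : ℝ} (hb : 1 < b) {f g : ι → ℝ}
    (hf : ∀ i, 0 ≤ f i) (hg : ∀ i, 0 ≤ g i) (hfg : ∀ i, 0 < f i → 0 < g i)
    (hsum : ∑ i, g i ≤ ∑ i, f i) : ∑ i, f i * Real.logb b (g i / f i) ≤ 0 := by
  have hterm : ∀ i, f i * Real.log (g i / f i) ≤ g i - f i := fun i => by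
    rcases (hf i).eq_or_lt with hi | hi
    · simpa [← hi] using hg i
    · calc f i * Real.log (g i / f i) ≤ f i * (g i / f i - 1) :=
            mul_le_mul_of_nonneg_left (Real.log_le_sub_one_of_pos (div_pos (hfg i hi) hi)) hi.le
        _ = g i - f i := by rw [mul_sub, mul_div_cancel₀ _ hi.ne', mul_one]
  simp only [Real.logb, ← mul_div_assoc, ← Finset.sum_div]
  refine div_nonpos_of_nonpos_of_nonneg ?_ (Real.log_pos hb).le
  calc ∑ i, f i * Real.log (g i / f i) ≤ ∑ i, (g i - f i) := Finset.sum_le_sum fun i _ => hterm i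
    _ ≤ 0 := by rw [Finset.sum_sub_distrib]; exact sub_nonpos.2 hsum

variable {Ω : Type} [Fintype Ω] {p : Ω → ℝ} {α β γ δ : Type}

lemma sum_prob_mul (p : Ω → ℝ) [Fintype α] (X : Ω → α) (F : α → ℝ) :
    ∑ a, prob p X a * F a = ∑ ω, p ω * F (X ω) := by
  simp only [prob, Finset.sum_mul, ite_mul, zero_mul]
  rw [Finset.sum_comm]
  simp

lemma sum_prob (p : Ω → ℝ) [Fintype α] (X : Ω → α) : ∑ a, prob p X a = ∑ ω, p ω := by
  simpa using sum_prob_mul p X 1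

lemma sum_prob_prodMk (p : Ω → ℝ) [Fintype α] (X : Ω → α) (Y : Ω → β) (b : β) :
    ∑ a, prob p (fun ω => (X ω, Y ω)) (a, b) = prob p Y b := by
  simp only [prob, Prod.mk.injEq, ite_and]
  rw [Finset.sum_comm]
  simp

lemma prob_nonneg (hp : ∀ ω, 0 ≤ p ω) (X : Ω → α) (a : α) : 0 ≤ prob p X a :=
  Finset.sum_nonneg fun ω _ => by split_ifs <;> simp [hp]

lemma prob_apply_pos (hp : ∀ ω, 0 ≤ p ω) (X : Ω → α) {ω : Ω} (hω : 0 < p ω) :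
    0 < prob p X (X ω) := by
  refine Finset.sum_pos' (fun ω' _ => ?_) ⟨ω, Finset.mem_univ _, by simpa using hω⟩
  split_ifs <;> simp [hp]

lemma exists_pos_of_prob_pos {X : Ω → α} {a : α} (ha : 0 < prob p X a) :
    ∃ ω, X ω = a ∧ 0 < p ω := by
  obtain ⟨ω, -, hω⟩ := Finset.exists_lt_of_sum_lt (s := Finset.univ) (f := fun _ : Ω => (0 : ℝ))
    (by simpa [prob] using ha)
  split_ifs at hω with h
  · exact ⟨ω, h, hω⟩
  · exact absurd hω (lt_irrefl 0)

lemma ent_eq_neg_sum (p : Ω → ℝ) [Fintype α] (X : Ω → α) :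
    ent p X = -∑ ω, p ω * Real.logb 2 (prob p X (X ω)) := by
  rw [ent, sum_prob_mul p X fun a => Real.logb 2 (prob p X a)]

lemma ent_congr (p : Ω → ℝ) [Fintype α] [Fintype β] {X : Ω → α} {Y : Ω → β}
    (h : ∀ ω ω', X ω = X ω' ↔ Y ω = Y ω') : ent p X = ent p Y := by
  simp only [ent_eq_neg_sum, prob, h]

/-- The law that `(X, Y, Z)` would have if `X` and `Y` were conditionally independent given `Z`
with the same laws of `(X, Z)` and `(Y, Z)`; it is `0` where `Z` has probability `0`. -/
noncomputable def condIndepLaw (p : Ω → ℝ) (X : Ω → α) (Y : Ω → β) (Z : Ω → γ)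
    (x : α × β × γ) : ℝ :=
  prob p (fun ω => (X ω, Z ω)) (x.1, x.2.2) * prob p (fun ω => (Y ω, Z ω)) x.2 / prob p Z x.2.2

lemma condIndepLaw_nonneg (hp : ∀ ω, 0 ≤ p ω) (X : Ω → α) (Y : Ω → β) (Z : Ω → γ)
    (x : α × β × γ) : 0 ≤ condIndepLaw p X Y Z x :=
  div_nonneg (mul_nonneg (prob_nonneg hp _ _) (prob_nonneg hp _ _)) (prob_nonneg hp _ _)

lemma condIndepLaw_apply_pos (hp : ∀ ω, 0 ≤ p ω) (X : Ω → α) (Y : Ω → β) (Z : Ω → γ) {ω : Ω}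
    (hω : 0 < p ω) : 0 < condIndepLaw p X Y Z (X ω, Y ω, Z ω) :=
  div_pos (mul_pos (prob_apply_pos hp (fun ω => (X ω, Z ω)) hω)
    (prob_apply_pos hp (fun ω => (Y ω, Z ω)) hω)) (prob_apply_pos hp Z hω)

variable [Fintype α] [Fintype β] [Fintype γ]

lemma sum_condIndepLaw (p : Ω → ℝ) (X : Ω → α) (Y : Ω → β) (Z : Ω → γ) :
    ∑ x, condIndepLaw p X Y Z x = ∑ ω, p ω := by
  have hX : ∀ y z, ∑ x, condIndepLaw p X Y Z (x, y, z)
      = prob p Z z * prob p (fun ω => (Y ω, Z ω)) (y, z) / prob p Z z := fun y z => by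
    simp only [condIndepLaw, ← Finset.sum_div, ← Finset.sum_mul, sum_prob_prodMk]
  have hXY : ∀ z, ∑ y, ∑ x, condIndepLaw p X Y Z (x, y, z) = prob p Z z := fun z => by
    simp only [hX, ← Finset.sum_div, ← Finset.mul_sum, sum_prob_prodMk, mul_self_div_self]
  simp only [Fintype.sum_prod_type_right, hXY, sum_prob]

lemma condMI_eq_neg_sum (hp : ∀ ω, 0 ≤ p ω) (X : Ω → α) (Y : Ω → β) (Z : Ω → γ) :
    condMI p X Y Z = -∑ x, prob p (fun ω => (X ω, Y ω, Z ω)) x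
      * Real.logb 2 (condIndepLaw p X Y Z x / prob p (fun ω => (X ω, Y ω, Z ω)) x) := by
  have hterm : ∀ ω, p ω * Real.logb 2 (condIndepLaw p X Y Z (X ω, Y ω, Z ω)
        / prob p (fun ω => (X ω, Y ω, Z ω)) (X ω, Y ω, Z ω))
      = p ω * Real.logb 2 (prob p (fun ω => (X ω, Z ω)) (X ω, Z ω))
        + p ω * Real.logb 2 (prob p (fun ω => (Y ω, Z ω)) (Y ω, Z ω))
        - p ω * Real.logb 2 (prob p Z (Z ω))
        - p ω * Real.logb 2 (prob p (fun ω => (X ω, Y ω, Z ω)) (X ω, Y ω, Z ω)) := fun ω => by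
    rcases (hp ω).eq_or_lt with hω | hω
    · simp [← hω]
    have hne {δ : Type} (W : Ω → δ) : prob p W (W ω) ≠ 0 := (prob_apply_pos hp W hω).ne'
    have hXZ := hne fun ω => (X ω, Z ω)
    have hYZ := hne fun ω => (Y ω, Z ω)
    rw [Real.logb_div (condIndepLaw_apply_pos hp X Y Z hω).ne' (hne fun ω => (X ω, Y ω, Z ω)),
      condIndepLaw, Real.logb_div (mul_ne_zero hXZ hYZ) (hne Z), Real.logb_mul hXZ hYZ]
    ring
  rw [sum_prob_mul p (fun ω => (X ω, Y ω, Z ω)) fun x => Real.logb 2 (condIndepLaw p X Y Z x / _)]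
  simp only [condMI, ent_eq_neg_sum, hterm, Finset.sum_add_distrib, Finset.sum_sub_distrib]
  ring

lemma condMI_nonneg (hp : ∀ ω, 0 ≤ p ω) (X : Ω → α) (Y : Ω → β) (Z : Ω → γ) :
    0 ≤ condMI p X Y Z := by
  rw [condMI_eq_neg_sum hp, neg_nonneg]
  refine sum_mul_logb_div_nonpos one_lt_two (prob_nonneg hp _) (condIndepLaw_nonneg hp X Y Z)
    (fun x hx => ?_) ((sum_condIndepLaw p X Y Z).trans (sum_prob p _).symm).le
  obtain ⟨ω, rfl, hω⟩ := exists_pos_of_prob_pos hx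
  exact condIndepLaw_apply_pos hp X Y Z hω

lemma condMI_chain_rule [Fintype δ] (p : Ω → ℝ) (X : Ω → α) (Y : Ω → β) (Z : Ω → γ) (W : Ω → δ) :
    condMI p (fun ω => (X ω, Z ω)) Y W
      = condMI p Z Y W + condMI p X Y (fun ω => (Z ω, W ω)) := by
  have hXZ : ent p (fun ω => ((X ω, Z ω), W ω)) = ent p (fun ω => (X ω, Z ω, W ω)) :=
    ent_congr p fun _ _ => by simp only [Prod.mk.injEq, and_assoc]
  have hYZ : ent p (fun ω => (Y ω, Z ω, W ω)) = ent p (fun ω => (Z ω, Y ω, W ω)) :=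
    ent_congr p fun _ _ => by simp only [Prod.mk.injEq, and_left_comm]
  have hXYZ : ent p (fun ω => ((X ω, Z ω), Y ω, W ω)) = ent p (fun ω => (X ω, Y ω, Z ω, W ω)) :=
    ent_congr p fun _ _ => by simp only [Prod.mk.injEq, and_assoc, and_left_comm]
  simp only [condMI, hXZ, hYZ, hXYZ]
  ring

lemma condMI_congr_left [Fintype δ] (p : Ω → ℝ) {X : Ω → α} {X' : Ω → β} (Y : Ω → γ) (Z : Ω → δ)
    (h : ∀ ω ω', X ω = X ω' ↔ X' ω = X' ω') : condMI p X Y Z = condMI p X' Y Z := by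
  have hXZ : ent p (fun ω => (X ω, Z ω)) = ent p (fun ω => (X' ω, Z ω)) :=
    ent_congr p fun ω ω' => by simp only [Prod.mk.injEq, h ω ω']
  have hXYZ : ent p (fun ω => (X ω, Y ω, Z ω)) = ent p (fun ω => (X' ω, Y ω, Z ω)) :=
    ent_congr p fun ω ω' => by simp only [Prod.mk.injEq, h ω ω']
  rw [condMI, condMI, hXZ, hXYZ]

end Entropy

section Tuple

variable {Ω 𝒬 β : Type} {p : Ω → ℝ} {K : ℕ} {α : Fin K → Type}

lemma VJ_eq_iff (V : (i : Fin K) → Ω → α i) (S : Finset (Fin K)) (ω ω' : Ω) :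
    VJ V S ω = VJ V S ω' ↔ ∀ j ∈ S, V j ω = V j ω' := by
  simp [VJ, funext_iff]

variable [Fintype Ω]

lemma CondIndep.prob_mul_pow_eq {Q : Ω → 𝒬} {V : (i : Fin K) → Ω → α i}
    (hind : CondIndep p Q V) (q : 𝒬) (v : (i : Fin K) → α i) :
    prob p (fun ω => (fun i => V i ω, Q ω)) (v, q) * prob p Q q ^ K
      = prob p Q q * ∏ i, prob p (fun ω => (V i ω, Q ω)) (v i, q) := by
  -- For `K = 0` the exponent `K - 1` in `CondIndep` is truncated to `0`.
  obtain rfl | hK := eq_or_ne K 0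
  · simp [prob, Subsingleton.elim _ v]
  · rw [← hind q v, ← mul_pow_sub_one hK]
    ring

variable [∀ i, Fintype (α i)] [Fintype 𝒬] [Fintype β]

lemma ent_VJ_empty (p : Ω → ℝ) (V : (i : Fin K) → Ω → α i) (W : Ω → β) :
    ent p (fun ω => (VJ V ∅ ω, W ω)) = ent p W :=
  ent_congr p fun ω ω' => by simp [VJ_eq_iff]

lemma ent_VJ_singleton (p : Ω → ℝ) (V : (i : Fin K) → Ω → α i) (W : Ω → β) (i : Fin K) :
    ent p (fun ω => (VJ V {i} ω, W ω)) = ent p (fun ω => (V i ω, W ω)) :=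
  ent_congr p fun ω ω' => by simp [VJ_eq_iff]

lemma ent_VJ_univ (p : Ω → ℝ) (V : (i : Fin K) → Ω → α i) (W : Ω → β) :
    ent p (fun ω => (VJ V Finset.univ ω, W ω)) = ent p (fun ω => (fun i => V i ω, W ω)) :=
  ent_congr p fun ω ω' => by
    simp only [Prod.mk.injEq, VJ_eq_iff, Finset.mem_univ, true_imp_iff]
    rw [funext_iff]

lemma isSubmodular_ent_VJ (hp : ∀ ω, 0 ≤ p ω) (V : (i : Fin K) → Ω → α i) (W : Ω → β) :
    IsSubmodular fun S => ent p fun ω => (VJ V S ω, W ω) := fun S T => by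
  have hS : ent p (fun ω => (VJ V S ω, VJ V (S ∩ T) ω, W ω)) = ent p (fun ω => (VJ V S ω, W ω)) :=
    ent_congr p fun ω ω' => by simp only [Prod.mk.injEq, VJ_eq_iff]; grind
  have hT : ent p (fun ω => (VJ V T ω, VJ V (S ∩ T) ω, W ω)) = ent p (fun ω => (VJ V T ω, W ω)) :=
    ent_congr p fun ω ω' => by simp only [Prod.mk.injEq, VJ_eq_iff]; grind
  have hST : ent p (fun ω => (VJ V S ω, VJ V T ω, VJ V (S ∩ T) ω, W ω))
      = ent p (fun ω => (VJ V (S ∪ T) ω, W ω)) :=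
    ent_congr p fun ω ω' => by simp only [Prod.mk.injEq, VJ_eq_iff]; grind
  have h := condMI_nonneg hp (VJ V S) (VJ V T) fun ω => (VJ V (S ∩ T) ω, W ω)
  rw [condMI, hS, hT, hST] at h
  simp only [Finset.sup_eq_union, Finset.inf_eq_inter]
  linarith

lemma CondIndep.ent_pi (hp : ∀ ω, 0 ≤ p ω) {Q : Ω → 𝒬} {V : (i : Fin K) → Ω → α i}
    (hind : CondIndep p Q V) :
    ent p (fun ω => (fun i => V i ω, Q ω))
      = ent p Q + ∑ i, (ent p (fun ω => (V i ω, Q ω)) - ent p Q) := by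
  have hterm : ∀ ω,
      p ω * Real.logb 2 (prob p (fun ω => (fun i => V i ω, Q ω)) (fun i => V i ω, Q ω))
        + K * (p ω * Real.logb 2 (prob p Q (Q ω)))
      = p ω * Real.logb 2 (prob p Q (Q ω))
        + ∑ i, p ω * Real.logb 2 (prob p (fun ω => (V i ω, Q ω)) (V i ω, Q ω)) := fun ω => by
    rcases (hp ω).eq_or_lt with hω | hω
    · simp [← hω]
    have hne {δ : Type} (W : Ω → δ) : prob p W (W ω) ≠ 0 := (prob_apply_pos hp W hω).ne'
    have hVQ i := hne fun ω => (V i ω, Q ω)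
    have hlog := congrArg (Real.logb 2) (hind.prob_mul_pow_eq (Q ω) fun i => V i ω)
    rw [Real.logb_mul (hne fun ω => (fun i => V i ω, Q ω)) (pow_ne_zero _ (hne Q)),
      Real.logb_mul (hne Q) (Finset.prod_ne_zero_iff.2 fun i _ => hVQ i), Real.logb_pow,
      Real.logb_prod _ _ fun i _ => hVQ i] at hlog
    rw [← Finset.mul_sum]
    linear_combination p ω * hlog
  have hsum := Fintype.sum_congr _ _ hterm
  rw [Finset.sum_add_distrib, Finset.sum_add_distrib, ← Finset.mul_sum, Finset.sum_comm] at hsum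
  simp only [ent_eq_neg_sum, Finset.sum_sub_distrib, Finset.sum_neg_distrib, Finset.sum_const,
    Finset.card_univ, Fintype.card_fin, nsmul_eq_mul]
  linarith

lemma CondIndep.ent_VJ_union_add_inter (hp : ∀ ω, 0 ≤ p ω) {Q : Ω → 𝒬}
    {V : (i : Fin K) → Ω → α i} (hind : CondIndep p Q V) (S T : Finset (Fin K)) :
    ent p (fun ω => (VJ V (S ∪ T) ω, Q ω)) + ent p (fun ω => (VJ V (S ∩ T) ω, Q ω))
      = ent p (fun ω => (VJ V S ω, Q ω)) + ent p (fun ω => (VJ V T ω, Q ω)) := by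
  refine (isSubmodular_ent_VJ hp V Q).union_add_inter_eq ?_ S T
  simpa only [ent_VJ_univ, ent_VJ_empty, ent_VJ_singleton] using hind.ent_pi hp

lemma condMI_VJ_empty (p : Ω → ℝ) (V : (i : Fin K) → Ω → α i) (W : Ω → β) (Q : Ω → 𝒬) :
    condMI p (VJ V ∅) W Q = 0 := by
  simp only [condMI, ent_VJ_empty p V Q, ent_VJ_empty p V fun ω => (W ω, Q ω)]
  ring

lemma condMI_VJ_compl (p : Ω → ℝ) (V : (i : Fin K) → Ω → α i) (W : Ω → β) (Q : Ω → 𝒬)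
    (S : Finset (Fin K)) :
    condMI p (VJ V S) W (fun ω => (VJ V Sᶜ ω, Q ω))
      = condMI p (VJ V Finset.univ) W Q - condMI p (VJ V Sᶜ) W Q := by
  rw [condMI_congr_left p (X' := fun ω => (VJ V S ω, VJ V Sᶜ ω)) W Q, condMI_chain_rule,
    add_sub_cancel_left]
  intro ω ω'
  simp only [Prod.mk.injEq, VJ_eq_iff, Finset.mem_univ, Finset.mem_compl]
  grind

lemma CondIndep.isSubmodular_neg_condMI_VJ (hp : ∀ ω, 0 ≤ p ω) {Q : Ω → 𝒬}
    {V : (i : Fin K) → Ω → α i} (hind : CondIndep p Q V) (W : Ω → β) :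
    IsSubmodular fun S => -condMI p (VJ V S) W Q := fun S T => by
  have hmod := hind.ent_VJ_union_add_inter hp S T
  have hsub := isSubmodular_ent_VJ hp V (fun ω => (W ω, Q ω)) S T
  simp only [condMI, Finset.sup_eq_union, Finset.inf_eq_inter] at hsub ⊢
  linarith

lemma CondIndep.isSubmodular_condMI_VJ_compl (hp : ∀ ω, 0 ≤ p ω) {Q : Ω → 𝒬}
    {V : (i : Fin K) → Ω → α i} (hind : CondIndep p Q V) (W : Ω → β) :
    IsSubmodular fun S => condMI p (VJ V S) W (fun ω => (VJ V Sᶜ ω, Q ω)) := by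
  simpa only [condMI_VJ_compl, sub_eq_add_neg] using
    (hind.isSubmodular_neg_condMI_VJ hp W).comp_compl.const_add (condMI p (VJ V Finset.univ) W Q)

end Tuple

section CompactForm

variable {K s t : ℕ}

lemma compactForm_eq_elementRearrangement (T : Fin t → Finset (Fin K)) :
    compactForm T = elementRearrangement T Finset.univ :=
  rfl

lemma mem_compactForm (T : Fin t → Finset (Fin K)) (i : ℕ) (k : Fin K) :
    k ∈ compactForm T i ↔ i ≤ (Finset.univ.filter fun j => k ∈ T j).card := by
  simp only [compactForm, Finset.mem_sup, Finset.mem_powersetCard_univ, Finset.mem_inf]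
  constructor
  · rintro ⟨S, rfl, hS⟩
    exact Finset.card_le_card fun j hj => by simpa using hS j hj
  · intro h
    obtain ⟨S, hS, rfl⟩ := Finset.exists_subset_card_eq h
    exact ⟨S, rfl, fun j hj => by simpa using hS hj⟩

lemma compactForm_tMax_add_one (T : Fin t → Finset (Fin K)) : compactForm T (tMax T + 1) = ∅ := by
  refine Finset.eq_empty_of_forall_notMem fun k hk => ?_
  have hle : (Finset.univ.filter fun j => k ∈ T j).card ≤ tMax T :=
    Finset.le_sup (f := fun k => (Finset.univ.filter fun j => k ∈ T j).card) (Finset.mem_univ k)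
  exact ((mem_compactForm T _ k).1 hk).not_gt (Nat.lt_succ_of_le hle)

lemma compactForm_congr {T : Fin t → Finset (Fin K)} {U : Fin s → Finset (Fin K)}
    (h : ∀ k, (Finset.univ.filter fun j => k ∈ T j).card
      = (Finset.univ.filter fun j => k ∈ U j).card) : compactForm T = compactForm U := by
  ext i k
  rw [mem_compactForm, mem_compactForm, h]

lemma tMax_congr {T : Fin t → Finset (Fin K)} {U : Fin s → Finset (Fin K)}
    (h : ∀ k, (Finset.univ.filter fun j => k ∈ T j).card
      = (Finset.univ.filter fun j => k ∈ U j).card) : tMax T = tMax U := by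
  simp only [tMax, h]

lemma IsSubmodular.sum_compactForm_le {M : Type*} [AddCommGroup M] [PartialOrder M]
    [IsOrderedAddMonoid M] {g : Finset (Fin K) → M} (hg : IsSubmodular g) (h0 : g ∅ = 0)
    (T : Fin t → Finset (Fin K)) :
    ∑ i ∈ Finset.Icc 1 (tMax T), g (compactForm T i) ≤ ∑ j, g (T j) := by
  have hbot := compactForm_tMax_add_one T
  rw [compactForm_eq_elementRearrangement] at hbot ⊢
  rw [← Finset.Ico_add_one_right_eq_Icc, Finset.sum_Ico_eq_sum_range]
  simpa only [add_comm 1, Nat.add_sub_cancel] using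
    hg.sum_elementRearrangement_le h0 T Finset.univ hbot

end CompactForm

/-- Redundancy of all other Fourier–Motzkin combinations: if the two lists
`J⁺_1, …, J⁺_{n⁺}` and `J⁻_1, …, J⁻_{n⁻}` of nonempty subsets of `𝒦` have the same
presence vector, and `J⊕_1, …, J⊕_{c_max}` is their common compact form without empty
sets, then with `b⁺(T) = I(V_T; Y | V_{T^c}, Q)` and `b⁻(T) = I(V_T; Z | Q)`,
`∑ᵢ b⁺(J⁺_i) − ∑ᵢ b⁻(J⁻_i) ≥ ∑ᵢ [b⁺(J⊕_i) − b⁻(J⊕_i)]`. -/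
theorem fm_combination_redundant {Ω 𝒬 𝒴 𝒵 : Type} [Fintype Ω] [Fintype 𝒬] [Fintype 𝒴]
    [Fintype 𝒵] {K : ℕ} {α : Fin K → Type} [∀ i, Fintype (α i)]
    (p : Ω → ℝ) (hp : ∀ ω, 0 ≤ p ω) (hp1 : ∑ ω : Ω, p ω = 1)
    (Q : Ω → 𝒬) (Y : Ω → 𝒴) (Z : Ω → 𝒵) (V : (i : Fin K) → Ω → α i)
    (hind : CondIndep p Q V) {np nm : ℕ}
    (Jp : Fin np → Finset (Fin K)) (Jm : Fin nm → Finset (Fin K))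
    (hJp : ∀ i, Jp i ≠ ∅) (hJm : ∀ i, Jm i ≠ ∅)
    (hpres : ∀ k : Fin K,
      (Finset.univ.filter fun j : Fin np => k ∈ Jp j).card
        = (Finset.univ.filter fun j : Fin nm => k ∈ Jm j).card) :
    ∑ i ∈ Finset.Icc 1 (tMax Jp),
        (condMI p (VJ V (compactForm Jp i)) Y (fun ω => (VJ V (compactForm Jp i)ᶜ ω, Q ω))
          - condMI p (VJ V (compactForm Jp i)) Z Q)
      ≤ ∑ i : Fin np, condMI p (VJ V (Jp i)) Y (fun ω => (VJ V (Jp i)ᶜ ω, Q ω))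
          - ∑ i : Fin nm, condMI p (VJ V (Jm i)) Z Q := by
  have hplus := (hind.isSubmodular_condMI_VJ_compl hp Y).sum_compactForm_le
    (by rw [condMI_VJ_compl, Finset.compl_empty, sub_self]) Jp
  have hminus := (hind.isSubmodular_neg_condMI_VJ hp Z).sum_compactForm_le
    (by rw [condMI_VJ_empty, neg_zero]) Jm
  rw [← compactForm_congr hpres, ← tMax_congr hpres, Finset.sum_neg_distrib,
    Finset.sum_neg_distrib, neg_le_neg_iff] at hminus
  rw [Finset.sum_sub_distrib]
  exact sub_le_sub hplus hminus
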